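/- For every real p > 1, the function σ_p : [0, π/4] → ℝ, which assigns to θ the ℓ_p length of the chord whose endpoints bound the arc of C_p of μ_p-length e_p with arc-midpoint ρ_p(θ), is increasing on [0, π/4] when p ∈ (1,2) and decreasing on [0, π/4] when p ∈ (2,∞); for p = 2 it is constant. In particular σ_p attains its minimum at θ = 0 when p ∈ (1,2) and at θ = π/4 when p ∈ (2,∞). -/

import Mathlib

open Real MeasureTheory intervalIntegral

/-- The ℓ_p norm of a point of ℝ². -/
noncomputable def lpN (p : ℝ) (z : ℝ × ℝ) : ℝ := (|z.1| ^ p + |z.2| ^ p) ^ (1 / p)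

/-- The ℓ_p unit circle. -/
def Cp (p : ℝ) : Set (ℝ × ℝ) := {z | lpN p z = 1}

/-- The normalization factor `N_p(φ) = (|sin φ|^p + |cos φ|^p)^{1/p}`. -/
noncomputable def Np (p φ : ℝ) : ℝ := (|Real.sin φ| ^ p + |Real.cos φ| ^ p) ^ (1 / p)

/-- The parameterization `ρ_p(φ) = (cos φ, sin φ)/N_p(φ)` of the ℓ_p unit circle. -/
noncomputable def rho (p φ : ℝ) : ℝ × ℝ := (Real.cos φ / Np p φ, Real.sin φ / Np p φ)

/-- The ℓ_p speed `‖ρ_p′(t)‖_p` of the parameterization `ρ_p`. -/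
noncomputable def speed (p t : ℝ) : ℝ := lpN p (deriv (rho p) t)

/-- The ℓ_p arc-length measure of a subset `U` of the ℓ_p unit circle. -/
noncomputable def muP (p : ℝ) (U : Set (ℝ × ℝ)) : ℝ :=
  ∫ t in {t : ℝ | t ∈ Set.Ico 0 (2 * Real.pi) ∧ rho p t ∈ U}, speed p t

/-- `π_p`, half the ℓ_p-circumference of the ℓ_p unit circle. -/
noncomputable def piP (p : ℝ) : ℝ := muP p (Cp p) / 2

/-- `L_p(u)`: the length of the shortest chord of `C_p` whose endpoints cut off a
counterclockwise arc of ℓ_p length `u`. -/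
noncomputable def chordMin (p u : ℝ) : ℝ :=
  sInf {d : ℝ | ∃ a b : ℝ, a ≤ b ∧ b ≤ a + 2 * Real.pi ∧
    (∫ t in a..b, speed p t) = u ∧ d = lpN p (rho p a - rho p b)}

lemma conc_four {f : ℝ → ℝ} (hf : ConcaveOn ℝ (Set.Ici 0) f) {a b c d : ℝ} (ha : 0 ≤ a)
    (hab : a ≤ b) (hac : a ≤ c) (h : b + c = a + d) : f a + f d ≤ f b + f c := by
  rcases eq_or_lt_of_le (show a ≤ d by linarith) with e | e
  · have h1 : b = a := by linarith
    have h2 : c = a := by linarith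
    rw [h1, h2, ← e]
  · have hd : (0:ℝ) < d - a := by linarith
    have hb := hf.2 (show a ∈ Set.Ici (0:ℝ) from ha) (show d ∈ Set.Ici (0:ℝ) from ha.trans e.le)
      (show 0 ≤ (d - b) / (d - a) from div_nonneg (by linarith) hd.le)
      (show 0 ≤ (b - a) / (d - a) from div_nonneg (by linarith) hd.le)
      (by field_simp; ring)
    have hc := hf.2 (show a ∈ Set.Ici (0:ℝ) from ha) (show d ∈ Set.Ici (0:ℝ) from ha.trans e.le)
      (show 0 ≤ (b - a) / (d - a) from div_nonneg (by linarith) hd.le)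
      (show 0 ≤ (d - b) / (d - a) from div_nonneg (by linarith) hd.le)
      (by field_simp; ring)
    simp only [smul_eq_mul] at hb hc
    have e1 : (d - b) / (d - a) * a + (b - a) / (d - a) * d = b := by field_simp; ring
    have e2 : (b - a) / (d - a) * a + (d - b) / (d - a) * d = c := by
      have : c = a + d - b := by linarith
      rw [this]; field_simp; ring
    rw [e1] at hb
    rw [e2] at hc
    have e3 : (d - b) / (d - a) * f a + (b - a) / (d - a) * f d
      + ((b - a) / (d - a) * f a + (d - b) / (d - a) * f d) = f a + f d := by field_simp; ring
    linarith

lemma conv_four {f : ℝ → ℝ} (hf : ConvexOn ℝ (Set.Ici 0) f) {a b c d : ℝ} (ha : 0 ≤ a)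
    (hab : a ≤ b) (hac : a ≤ c) (h : b + c = a + d) : f b + f c ≤ f a + f d := by
  have := conc_four hf.neg ha hab hac h
  simp only [Pi.neg_apply] at this
  linarith

/-- signed power with exponent `p - 1` -/
noncomputable def sg (p x : ℝ) : ℝ := |x| ^ (p - 2) * x

lemma sg_nonneg {p x : ℝ} (hp : 1 < p) (hx : 0 ≤ x) : sg p x = x ^ (p - 1) := by
  unfold sg
  rcases eq_or_lt_of_le hx with e | e
  · rw [← e, Real.zero_rpow (by linarith)]; simp
  · rw [abs_of_pos e]
    nth_rewrite 2 [← Real.rpow_one x]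
    rw [← Real.rpow_add e]; congr 1; ring

lemma sg_neg (p x : ℝ) : sg p (-x) = - sg p x := by
  unfold sg; rw [abs_neg]; ring

lemma abs_sg {p x : ℝ} (hp : 1 < p) : |sg p x| = |x| ^ (p - 1) := by
  have h := sg_nonneg hp (abs_nonneg x)
  rw [← h]; unfold sg
  rw [abs_mul, abs_abs, abs_of_nonneg (Real.rpow_nonneg (abs_nonneg _) _)]

lemma core {p x y z w ε : ℝ} (hp : 1 < p)
    (hε : ∀ a b c d : ℝ, 0 ≤ a → a ≤ b → a ≤ c → b + c = a + d →
      ε * (a ^ (p - 1) + d ^ (p - 1)) ≤ ε * (b ^ (p - 1) + c ^ (p - 1)))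
    (hx : 0 ≤ x) (hy : 0 ≤ y) (hz : 0 < z) (h1 : |w| * x ≤ y * z) (h2 : |w| * y ≤ x * z)
    (ha : x ^ p + y ^ p = 1) (hb : z ^ p + |w| ^ p = 1) (hyw : 0 ≤ y + w) :
    0 ≤ (x + z) ^ (p - 1) * y ^ (p - 1) - (y + w) ^ (p - 1) * x ^ (p - 1) ∧
    ε * ((x + z) ^ (p - 1) * y ^ (p - 1) - (y + w) ^ (p - 1) * x ^ (p - 1)) ≤
      ε * ((y + w) ^ (p - 1) * z ^ (p - 1) - (x + z) ^ (p - 1) * sg p w) ∧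
    ε * ((|w| ^ (p - 1)) ^ p + (z ^ (p - 1)) ^ p) ≤ ε * ((y ^ (p - 1)) ^ p + (x ^ (p - 1)) ^ p) := by
  have hp0 : 0 < p := by linarith
  have hl : 0 < p - 1 := by linarith
  have hw := abs_nonneg w
  have g1 : |w| ^ p * x ^ p ≤ y ^ p * z ^ p := by
    rw [← Real.mul_rpow hw hx, ← Real.mul_rpow hy hz.le]
    exact Real.rpow_le_rpow (by positivity) h1 hp0.le
  have g2 : |w| ^ p * y ^ p ≤ x ^ p * z ^ p := by
    rw [← Real.mul_rpow hw hy, ← Real.mul_rpow hx hz.le]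
    exact Real.rpow_le_rpow (by positivity) h2 hp0.le
  have ex : x ^ p = 1 - y ^ p := by linarith
  have ez : z ^ p = 1 - |w| ^ p := by linarith
  rw [ex, ez] at g1 g2
  have WY : |w| ^ p ≤ y ^ p := by linarith
  have WX : |w| ^ p ≤ x ^ p := by linarith
  have sw : ∀ t : ℝ, 0 ≤ t → (t ^ (p - 1)) ^ p = (t ^ p) ^ (p - 1) := by
    intro t ht
    rw [← Real.rpow_mul ht, ← Real.rpow_mul ht, mul_comm]
  have hprod : |w| * z ≤ x * y := by
    have : (|w| * z) ^ p ≤ (x * y) ^ p := by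
      rw [Real.mul_rpow hw hz.le, Real.mul_rpow hx hy, ex, ez]
      rw [ex] at WX
      nlinarith
    exact (Real.rpow_le_rpow_iff (by positivity) (by positivity) hp0).1 this
  have hwx : w * x ≤ y * z := (mul_le_mul_of_nonneg_right (le_abs_self w) hx).trans h1
  have hwz : w * z ≤ x * y := (mul_le_mul_of_nonneg_right (le_abs_self w) hz.le).trans hprod
  have hxz : 0 ≤ x + z := by linarith
  refine ⟨?_, ?_, ?_⟩
  · rw [← Real.mul_rpow hxz hy, ← Real.mul_rpow hyw hx, sub_nonneg]
    exact Real.rpow_le_rpow (by positivity) (by nlinarith) hl.le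
  · rw [← Real.mul_rpow hxz hy, ← Real.mul_rpow hyw hx, ← Real.mul_rpow hyw hz.le]
    rcases le_total 0 w with h | h
    · rw [sg_nonneg hp h, ← Real.mul_rpow hxz h]
      have := hε ((x + z) * w) ((y + w) * x) ((y + w) * z) ((x + z) * y) (by positivity)
        (by nlinarith) (by nlinarith) (by ring)
      nlinarith
    · obtain ⟨k, rfl⟩ : ∃ k, w = -k := ⟨-w, by ring⟩
      have hk : 0 ≤ k := by linarith
      rw [sg_neg, sg_nonneg hp hk]
      have e1 := hε 0 ((y + -k) * z) ((x + z) * k) ((y + -k) * z + (x + z) * k) le_rfl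
        (by positivity) (by positivity) (by ring)
      have e2 := hε 0 ((y + -k) * x) ((y + -k) * z + (x + z) * k) ((x + z) * y) le_rfl
        (by positivity) (by positivity) (by ring)
      rw [Real.zero_rpow hl.ne'] at e1 e2
      rw [mul_neg, sub_neg_eq_add, ← Real.mul_rpow hxz hk]
      linarith
  · rw [sw _ hw, sw _ hz.le, sw _ hy, sw _ hx]
    exact (hε _ _ _ _ (by positivity) WY WX (by linarith))

lemma core_final {p x y z w : ℝ} (hp : 1 < p)
    (hx : 0 ≤ x) (hy : 0 ≤ y) (hz : 0 < z) (h1 : |w| * x ≤ y * z) (h2 : |w| * y ≤ x * z)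
    (ha : x ^ p + y ^ p = 1) (hb : z ^ p + |w| ^ p = 1) (hyw : 0 ≤ y + w) {na nb : ℝ}
    (hna : na = ((y ^ (p - 1)) ^ p + (x ^ (p - 1)) ^ p) ^ (1 / p))
    (hnb : nb = ((|w| ^ (p - 1)) ^ p + (z ^ (p - 1)) ^ p) ^ (1 / p))
    (hna0 : 0 < na) (hnb0 : 0 < nb) :
    (p ≤ 2 → 0 ≤ sg p (x + z) * (-sg p y / na + -sg p w / nb)
      + sg p (y + w) * (sg p x / na + sg p z / nb)) ∧
    (2 ≤ p → sg p (x + z) * (-sg p y / na + -sg p w / nb)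
      + sg p (y + w) * (sg p x / na + sg p z / nb) ≤ 0) := by
  have hxz : 0 ≤ x + z := by linarith
  have e : sg p (x + z) * (-sg p y / na + -sg p w / nb)
      + sg p (y + w) * (sg p x / na + sg p z / nb) =
      ((y + w) ^ (p - 1) * z ^ (p - 1) - (x + z) ^ (p - 1) * sg p w) / nb -
      ((x + z) ^ (p - 1) * y ^ (p - 1) - (y + w) ^ (p - 1) * x ^ (p - 1)) / na := by
    rw [sg_nonneg hp hxz, sg_nonneg hp hyw, sg_nonneg hp hx, sg_nonneg hp hy, sg_nonneg hp hz.le]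
    ring
  rw [e]
  have hw := abs_nonneg w
  constructor
  · intro h
    obtain ⟨k1, k2, k3⟩ := core (ε := 1) hp (fun a b c d h1 h2 h3 h4 => by
      rw [one_mul, one_mul]
      exact conc_four (Real.concaveOn_rpow (by linarith : 0 ≤ p - 1) (by linarith)) h1 h2 h3 h4)
      hx hy hz h1 h2 ha hb hyw
    rw [one_mul, one_mul] at k2 k3
    have : nb ≤ na := by
      rw [hna, hnb]; exact Real.rpow_le_rpow (by positivity) k3 (by positivity)
    rw [sub_nonneg]
    exact div_le_div₀ (k1.trans k2) k2 hnb0 this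
  · intro h
    obtain ⟨k1, k2, k3⟩ := core (ε := -1) hp (fun a b c d h1 h2 h3 h4 => by
      have := conv_four (convexOn_rpow (by linarith : 1 ≤ p - 1)) h1 h2 h3 h4
      linarith)
      hx hy hz h1 h2 ha hb hyw
    have : na ≤ nb := by
      rw [hna, hnb]; exact Real.rpow_le_rpow (by positivity) (by linarith) (by positivity)
    rw [sub_nonpos]
    exact div_le_div₀ k1 (by linarith) hna0 this

/-- the sum of powers under the root in `Np` -/
noncomputable def Qf (p t : ℝ) : ℝ := |Real.sin t| ^ p + |Real.cos t| ^ p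

lemma Qf_pos (p t : ℝ) : 0 < Qf p t := by
  unfold Qf
  rcases eq_or_ne (Real.sin t) 0 with h | h
  · have : Real.cos t ≠ 0 := by
      intro h'; have := Real.sin_sq_add_cos_sq t; rw [h, h'] at this; norm_num at this
    have h2 : 0 < |Real.cos t| ^ p := Real.rpow_pos_of_pos (abs_pos.2 this) _
    have h3 : 0 ≤ |Real.sin t| ^ p := Real.rpow_nonneg (abs_nonneg _) _
    linarith
  · have h2 : 0 < |Real.sin t| ^ p := Real.rpow_pos_of_pos (abs_pos.2 h) _
    have h3 : 0 ≤ |Real.cos t| ^ p := Real.rpow_nonneg (abs_nonneg _) _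
    linarith

lemma Np_pos (p t : ℝ) : 0 < Np p t := Real.rpow_pos_of_pos (Qf_pos p t) _

lemma Np_rpow {p : ℝ} (hp : 1 < p) (t : ℝ) : Np p t ^ p = Qf p t := by
  change (Qf p t ^ (1 / p)) ^ p = _
  rw [← Real.rpow_mul (Qf_pos p t).le, one_div, inv_mul_cancel₀ (by linarith), Real.rpow_one]

lemma rho_eq (p t : ℝ) : rho p t =
    (Real.cos t * Qf p t ^ (-(1 / p)), Real.sin t * Qf p t ^ (-(1 / p))) := by
  unfold rho Np
  rw [Real.rpow_neg (Qf_pos p t).le]; rfl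

lemma abs_rpow_eq_sg {p : ℝ} (hp : 1 < p) (x : ℝ) : |x| ^ p = sg p x * x := by
  unfold sg
  rcases eq_or_ne x 0 with h | h
  · rw [h, abs_zero, Real.zero_rpow (by linarith)]; ring
  · rw [mul_assoc, ← abs_mul_abs_self x, ← mul_assoc]
    have := abs_pos.2 h
    nth_rewrite 3 [← Real.rpow_one |x|]
    nth_rewrite 4 [← Real.rpow_one |x|]
    rw [← Real.rpow_add this, ← Real.rpow_add this]; congr 1; ring

lemma hasDerivAt_absp {p : ℝ} (hp : 1 < p) (x : ℝ) :
    HasDerivAt (fun x : ℝ => |x| ^ p) (p * sg p x) x := by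
  have := hasDerivAt_abs_rpow x hp
  rwa [mul_assoc] at this

lemma continuous_sg {p : ℝ} (hp : 1 < p) : Continuous (sg p) := by
  have h : ContDiff ℝ 1 (fun x : ℝ => |x| ^ p) := contDiff_norm_rpow (E := ℝ) hp
  have h2 := h.continuous_deriv le_rfl
  have : sg p = fun x => p⁻¹ * deriv (fun x : ℝ => |x| ^ p) x := by
    funext x
    rw [(hasDerivAt_absp hp x).deriv, ← mul_assoc, inv_mul_cancel₀ (by linarith), one_mul]
  rw [this]
  exact continuous_const.mul h2

lemma hasDerivAt_Qf {p : ℝ} (hp : 1 < p) (t : ℝ) : HasDerivAt (Qf p)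
    (p * sg p (Real.sin t) * Real.cos t + p * sg p (Real.cos t) * (-Real.sin t)) t := by
  exact ((hasDerivAt_absp hp (Real.sin t)).comp t (Real.hasDerivAt_sin t)).add
    ((hasDerivAt_absp hp (Real.cos t)).comp t (Real.hasDerivAt_cos t))

lemma continuous_Qf {p : ℝ} (hp : 1 < p) : Continuous (Qf p) :=
  continuous_iff_continuousAt.2 fun t => (hasDerivAt_Qf hp t).continuousAt

/-- scalar factor of the velocity -/
noncomputable def kap (p t : ℝ) : ℝ := Qf p t ^ (-(1 / p) - 1)

lemma kap_pos (p t : ℝ) : 0 < kap p t := Real.rpow_pos_of_pos (Qf_pos p t) _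

lemma continuous_kap {p : ℝ} (hp : 1 < p) : Continuous (kap p) :=
  (continuous_Qf hp).rpow_const fun t => Or.inl (Qf_pos p t).ne'

lemma hasDerivAt_rho1 {p : ℝ} (hp : 1 < p) (t : ℝ) :
    HasDerivAt (fun t => (rho p t).1) (-sg p (Real.sin t) * kap p t) t := by
  have h := (Real.hasDerivAt_cos t).mul
    ((hasDerivAt_Qf hp t).rpow_const (p := -(1 / p)) (Or.inl (Qf_pos p t).ne'))
  have e : (fun t => (rho p t).1) = (Real.cos * fun t => Qf p t ^ (-(1 / p))) := by
    funext t; rw [rho_eq]; rfl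
  rw [e]
  refine h.congr_deriv ?_
  have e2 : Qf p t ^ (-(1 / p)) = Qf p t * kap p t := by
    unfold kap
    nth_rewrite 2 [← Real.rpow_one (Qf p t)]
    rw [← Real.rpow_add (Qf_pos p t)]; congr 1; ring
  have e3 : Qf p t = sg p (Real.sin t) * Real.sin t + sg p (Real.cos t) * Real.cos t := by
    rw [← abs_rpow_eq_sg hp, ← abs_rpow_eq_sg hp]; rfl
  have e4 : Qf p t ^ (-(1 / p) - 1) = kap p t := rfl
  rw [e4, e2]
  nth_rewrite 1 [e3]
  have e5 := Real.sin_sq_add_cos_sq t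
  have hp0 : p ≠ 0 := by linarith
  field_simp
  linear_combination (-sg p (Real.sin t) * kap p t) * e5

lemma hasDerivAt_rho2 {p : ℝ} (hp : 1 < p) (t : ℝ) :
    HasDerivAt (fun t => (rho p t).2) (sg p (Real.cos t) * kap p t) t := by
  have h := (Real.hasDerivAt_sin t).mul
    ((hasDerivAt_Qf hp t).rpow_const (p := -(1 / p)) (Or.inl (Qf_pos p t).ne'))
  have e : (fun t => (rho p t).2) = (Real.sin * fun t => Qf p t ^ (-(1 / p))) := by
    funext t; rw [rho_eq]; rfl
  rw [e]
  refine h.congr_deriv ?_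
  have e2 : Qf p t ^ (-(1 / p)) = Qf p t * kap p t := by
    unfold kap
    nth_rewrite 2 [← Real.rpow_one (Qf p t)]
    rw [← Real.rpow_add (Qf_pos p t)]; congr 1; ring
  have e3 : Qf p t = sg p (Real.sin t) * Real.sin t + sg p (Real.cos t) * Real.cos t := by
    rw [← abs_rpow_eq_sg hp, ← abs_rpow_eq_sg hp]; rfl
  have e4 : Qf p t ^ (-(1 / p) - 1) = kap p t := rfl
  rw [e4, e2]
  nth_rewrite 1 [e3]
  have e5 := Real.sin_sq_add_cos_sq t
  have hp0 : p ≠ 0 := by linarith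
  field_simp
  linear_combination (sg p (Real.cos t) * kap p t) * e5

lemma hasDerivAt_rho {p : ℝ} (hp : 1 < p) (t : ℝ) : HasDerivAt (rho p)
    (-sg p (Real.sin t) * kap p t, sg p (Real.cos t) * kap p t) t :=
  (hasDerivAt_rho1 hp t).prodMk (hasDerivAt_rho2 hp t)

lemma lpN_smul {p : ℝ} (hp : 1 < p) {k : ℝ} (hk : 0 ≤ k) (a b : ℝ) :
    lpN p (a * k, b * k) = lpN p (a, b) * k := by
  unfold lpN
  simp only [abs_mul, abs_of_nonneg hk]
  rw [Real.mul_rpow (abs_nonneg _) hk, Real.mul_rpow (abs_nonneg _) hk, ← add_mul,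
    Real.mul_rpow (by positivity) (by positivity), ← Real.rpow_mul hk, mul_one_div_cancel (by linarith),
    Real.rpow_one]

lemma speed_eq {p : ℝ} (hp : 1 < p) (t : ℝ) :
    speed p t = lpN p (sg p (Real.sin t), sg p (Real.cos t)) * kap p t := by
  unfold speed
  rw [(hasDerivAt_rho hp t).deriv, lpN_smul hp (kap_pos p t).le]
  congr 1
  simp [lpN]

lemma lpN_pos {p : ℝ} {a b : ℝ} (h : a ≠ 0 ∨ b ≠ 0) : 0 < lpN p (a, b) := by
  unfold lpN
  apply Real.rpow_pos_of_pos
  have h1 : 0 ≤ |a| ^ p := Real.rpow_nonneg (abs_nonneg _) _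
  have h2 : 0 ≤ |b| ^ p := Real.rpow_nonneg (abs_nonneg _) _
  rcases h with h | h
  · have : 0 < |a| ^ p := Real.rpow_pos_of_pos (abs_pos.2 h) _
    simp only; linarith
  · have : 0 < |b| ^ p := Real.rpow_pos_of_pos (abs_pos.2 h) _
    simp only; linarith

lemma sg_ne {p x : ℝ} (hx : x ≠ 0) : sg p x ≠ 0 :=
  mul_ne_zero (Real.rpow_pos_of_pos (abs_pos.2 hx) _).ne' hx

lemma sc_ne (t : ℝ) : Real.sin t ≠ 0 ∨ Real.cos t ≠ 0 := by
  by_contra! h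
  have := Real.sin_sq_add_cos_sq t; rw [h.1, h.2] at this; norm_num at this

lemma speed_pos {p : ℝ} (hp : 1 < p) (t : ℝ) : 0 < speed p t := by
  rw [speed_eq hp]
  exact mul_pos (lpN_pos ((sc_ne t).imp sg_ne sg_ne)) (kap_pos p t)

lemma continuous_lpN {p : ℝ} (hp : 1 < p) : Continuous (lpN p) := by
  unfold lpN
  have hp0 : 0 ≤ p := by linarith
  exact ((continuous_fst.abs.rpow_const fun _ => Or.inr hp0).add
    (continuous_snd.abs.rpow_const fun _ => Or.inr hp0)).rpow_const fun _ => Or.inr (by positivity)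

lemma continuous_speed {p : ℝ} (hp : 1 < p) : Continuous (speed p) := by
  have : speed p = fun t => lpN p (sg p (Real.sin t), sg p (Real.cos t)) * kap p t :=
    funext (speed_eq hp)
  rw [this]
  exact ((continuous_lpN hp).comp (((continuous_sg hp).comp Real.continuous_sin).prodMk
    ((continuous_sg hp).comp Real.continuous_cos))).mul (continuous_kap hp)

lemma lpN_neg1 (p a b : ℝ) : lpN p (-a, b) = lpN p (a, b) := by simp [lpN]

lemma lpN_neg2 (p a b : ℝ) : lpN p (a, -b) = lpN p (a, b) := by simp [lpN]

lemma lpN_swap (p a b : ℝ) : lpN p (a, b) = lpN p (b, a) := by simp [lpN, add_comm]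

lemma Qf_add (p t : ℝ) : Qf p (t + Real.pi / 2) = Qf p t := by
  unfold Qf; rw [Real.sin_add_pi_div_two, Real.cos_add_pi_div_two, abs_neg, add_comm]

lemma speed_add {p : ℝ} (hp : 1 < p) (t : ℝ) : speed p (t + Real.pi / 2) = speed p t := by
  rw [speed_eq hp, speed_eq hp, Real.sin_add_pi_div_two, Real.cos_add_pi_div_two, sg_neg, lpN_neg2,
    lpN_swap]
  unfold kap; rw [Qf_add]

lemma speed_neg {p : ℝ} (hp : 1 < p) (t : ℝ) : speed p (-t) = speed p t := by
  rw [speed_eq hp, speed_eq hp, Real.sin_neg, Real.cos_neg, sg_neg, lpN_neg1]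
  unfold kap Qf; rw [Real.sin_neg, Real.cos_neg, abs_neg]

lemma rho_add (p t : ℝ) : rho p (t + Real.pi / 2) = (-(rho p t).2, (rho p t).1) := by
  rw [rho_eq, rho_eq, Qf_add, Real.sin_add_pi_div_two, Real.cos_add_pi_div_two]; simp

/-- arc length from angle `0` -/
noncomputable def Lf (p φ : ℝ) : ℝ := ∫ t in (0 : ℝ)..φ, speed p t

lemma speed_ii {p : ℝ} (hp : 1 < p) (a b : ℝ) : IntervalIntegrable (speed p) volume a b :=
  (continuous_speed hp).intervalIntegrable a b

lemma Lf_sub {p : ℝ} (hp : 1 < p) (a b : ℝ) : (∫ t in a..b, speed p t) = Lf p b - Lf p a := by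
  unfold Lf
  rw [intervalIntegral.integral_interval_sub_left (speed_ii hp _ _) (speed_ii hp _ _)]

lemma hasDerivAt_Lf {p : ℝ} (hp : 1 < p) (t : ℝ) : HasDerivAt (Lf p) (speed p t) t :=
  ((continuous_speed hp).integral_hasStrictDerivAt 0 t).hasDerivAt

lemma Lf_zero (p : ℝ) : Lf p 0 = 0 := by simp [Lf]

lemma Lf_neg {p : ℝ} (hp : 1 < p) (t : ℝ) : Lf p (-t) = - Lf p t := by
  have h := intervalIntegral.integral_comp_neg (a := 0) (b := t) (f := speed p)
  simp only [speed_neg hp, neg_zero] at h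
  unfold Lf
  rw [h, intervalIntegral.integral_symm]

lemma Lf_add {p : ℝ} (hp : 1 < p) (t : ℝ) :
    Lf p (t + Real.pi / 2) = Lf p t + Lf p (Real.pi / 2) := by
  have h := Function.Periodic.intervalIntegral_add_eq (f := speed p) (T := Real.pi / 2)
    (speed_add hp) t 0
  rw [Lf_sub hp, Lf_sub hp, zero_add, Lf_zero] at h
  linarith

lemma Lf_refl {p : ℝ} (hp : 1 < p) (t : ℝ) :
    Lf p (Real.pi / 2 - t) = Lf p (Real.pi / 2) - Lf p t := by
  have := Lf_add hp (-t)
  rw [Lf_neg hp] at this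
  rw [show Real.pi / 2 - t = -t + Real.pi / 2 by ring, this]; ring

lemma Lf_quarter {p : ℝ} (hp : 1 < p) : Lf p (Real.pi / 4) = Lf p (Real.pi / 2) / 2 := by
  have := Lf_refl hp (Real.pi / 4)
  rw [show Real.pi / 2 - Real.pi / 4 = Real.pi / 4 by ring] at this
  linarith

lemma Lf_strictMono {p : ℝ} (hp : 1 < p) : StrictMono (Lf p) :=
  strictMono_of_deriv_pos fun t => by rw [(hasDerivAt_Lf hp t).deriv]; exact speed_pos hp t

lemma Lf_cont {p : ℝ} (hp : 1 < p) : Continuous (Lf p) :=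
  continuous_iff_continuousAt.2 fun t => (hasDerivAt_Lf hp t).continuousAt

lemma Lf_half_pos {p : ℝ} (hp : 1 < p) : 0 < Lf p (Real.pi / 2) := by
  rw [← Lf_zero p]; exact Lf_strictMono hp (by positivity)

lemma Lf_nat {p : ℝ} (hp : 1 < p) (n : ℕ) :
    Lf p (n * (Real.pi / 2)) = n * Lf p (Real.pi / 2) := by
  induction n with
  | zero => simp [Lf_zero]
  | succ k ih =>
    push_cast
    rw [show ((k : ℝ) + 1) * (Real.pi / 2) = k * (Real.pi / 2) + Real.pi / 2 by ring, Lf_add hp, ih]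
    ring

lemma Lf_surj {p : ℝ} (hp : 1 < p) : Function.Surjective (Lf p) := by
  intro y
  obtain ⟨n, hn⟩ := exists_nat_ge (|y| / Lf p (Real.pi / 2))
  rw [div_le_iff₀ (Lf_half_pos hp)] at hn
  refine mem_range_of_exists_le_of_exists_ge (Lf_cont hp) ⟨-(n * (Real.pi / 2)), ?_⟩
    ⟨n * (Real.pi / 2), ?_⟩
  · rw [Lf_neg hp, Lf_nat hp]; linarith [neg_abs_le y]
  · rw [Lf_nat hp]; linarith [le_abs_self y]

lemma exists_inv {p : ℝ} (hp : 1 < p) : ∃ g : ℝ → ℝ, (∀ s, Lf p (g s) = s) ∧ (∀ t, g (Lf p t) = t) ∧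
    ∀ s, HasDerivAt g (speed p (g s))⁻¹ s := by
  let e := StrictMono.orderIsoOfSurjective (Lf p) (Lf_strictMono hp) (Lf_surj hp)
  have h1 : ∀ s, Lf p (e.symm s) = s := fun s => e.apply_symm_apply s
  have h2 : ∀ t, e.symm (Lf p t) = t := fun t => e.symm_apply_apply t
  refine ⟨e.symm, h1, h2, fun s => ?_⟩
  exact HasDerivAt.of_local_left_inverse e.symm.continuous.continuousAt (hasDerivAt_Lf hp _)
    (speed_pos hp _).ne' (Filter.Eventually.of_forall h1)

lemma rho_mem {p : ℝ} (hp : 1 < p) (t : ℝ) : |(rho p t).1| ^ p + |(rho p t).2| ^ p = 1 := by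
  have hN := Np_pos p t
  unfold rho
  simp only [abs_div, abs_of_pos hN]
  rw [Real.div_rpow (abs_nonneg _) hN.le, Real.div_rpow (abs_nonneg _) hN.le, Np_rpow hp, ← add_div,
    add_comm]
  exact div_self (Qf_pos p t).ne'

lemma piP_eq {p : ℝ} (hp : 1 < p) : piP p = 2 * Lf p (Real.pi / 2) := by
  have : {t : ℝ | t ∈ Set.Ico 0 (2 * Real.pi) ∧ rho p t ∈ Cp p} = Set.Ico 0 (2 * Real.pi) := by
    ext t
    simp only [Set.mem_ofPred_eq, and_iff_left_iff_imp]
    intro _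
    simp [Cp, lpN, rho_mem hp t]
  unfold piP muP
  rw [this, integral_Ico_eq_integral_Ioc, ← intervalIntegral.integral_of_le (by positivity)]
  have h := Lf_nat hp 4
  push_cast at h
  rw [show (4:ℝ) * (Real.pi / 2) = 2 * Real.pi by ring] at h
  change Lf p (2 * Real.pi) / 2 = _
  rw [h]; ring

lemma sg_mul {p : ℝ} (hp : 1 < p) {k : ℝ} (hk : 0 < k) (x : ℝ) :
    sg p (x * k) = sg p x * k ^ (p - 1) := by
  rw [← sg_nonneg hp hk.le]
  unfold sg
  rw [abs_mul, Real.mul_rpow (abs_nonneg _) (abs_nonneg _)]; ring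

lemma sg_rho {p : ℝ} (hp : 1 < p) (t : ℝ) : ∃ c : ℝ, 0 < c ∧
    sg p (rho p t).1 = sg p (Real.cos t) * c ∧ sg p (rho p t).2 = sg p (Real.sin t) * c := by
  have h : 0 < Qf p t ^ (-(1 / p)) := Real.rpow_pos_of_pos (Qf_pos p t) _
  refine ⟨(Qf p t ^ (-(1 / p))) ^ (p - 1), Real.rpow_pos_of_pos h _, ?_, ?_⟩
  · rw [rho_eq]; exact sg_mul hp h _
  · rw [rho_eq]; exact sg_mul hp h _

/-- normalising factor of the tangent vector -/
noncomputable def nn (p t : ℝ) : ℝ := lpN p (sg p (rho p t).2, sg p (rho p t).1)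

lemma nn_pos {p : ℝ} (hp : 1 < p) (t : ℝ) : 0 < nn p t := by
  obtain ⟨c, hc, h1, h2⟩ := sg_rho hp t
  unfold nn
  rw [h1, h2, lpN_smul hp hc.le]
  exact mul_pos (lpN_pos ((sc_ne t).imp sg_ne sg_ne)) hc

lemma vel1 {p : ℝ} (hp : 1 < p) (t : ℝ) :
    -sg p (Real.sin t) * kap p t * (speed p t)⁻¹ = -sg p (rho p t).2 / nn p t := by
  obtain ⟨c, hc, h1, h2⟩ := sg_rho hp t
  have hk := kap_pos p t
  have hl : 0 < lpN p (sg p (Real.sin t), sg p (Real.cos t)) :=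
    lpN_pos ((sc_ne t).imp sg_ne sg_ne)
  unfold nn
  rw [h1, h2, lpN_smul hp hc.le, speed_eq hp]
  field_simp

lemma vel2 {p : ℝ} (hp : 1 < p) (t : ℝ) :
    sg p (Real.cos t) * kap p t * (speed p t)⁻¹ = sg p (rho p t).1 / nn p t := by
  obtain ⟨c, hc, h1, h2⟩ := sg_rho hp t
  have hk := kap_pos p t
  have hl : 0 < lpN p (sg p (Real.sin t), sg p (Real.cos t)) :=
    lpN_pos ((sc_ne t).imp sg_ne sg_ne)
  unfold nn
  rw [h1, h2, lpN_smul hp hc.le, speed_eq hp]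
  field_simp

/-- the integrand in the definition of `e_p` -/
noncomputable def Ig (p z : ℝ) : ℝ := (z ^ (p ^ 2 - p) * (1 - z ^ p) ^ (1 - p) + 1) ^ (1 / p)

lemma Ig_cont {p : ℝ} (hp : 1 < p) : ContinuousOn (Ig p) (Set.Ico 0 1) := by
  unfold Ig
  have h1 : 0 ≤ p ^ 2 - p := by nlinarith
  have hp0 : 0 < p := by linarith
  refine ContinuousOn.rpow_const ?_ fun z _ => Or.inr (by positivity)
  refine ContinuousOn.add (ContinuousOn.mul ?_ ?_) continuousOn_const
  · exact continuousOn_id.rpow_const fun z _ => Or.inr h1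
  · refine ContinuousOn.rpow_const ?_ fun z hz => Or.inl ?_
    · exact continuousOn_const.sub (continuousOn_id.rpow_const fun z _ => Or.inr hp0.le)
    · have := Real.rpow_lt_one hz.1 hz.2 hp0
      exact (sub_pos.2 this).ne'

lemma Ig_nonneg {p z : ℝ} (h0 : 0 ≤ z) (h1 : z ≤ 1) (hp : 1 < p) : 0 ≤ Ig p z := by
  have : z ^ p ≤ 1 := Real.rpow_le_one h0 h1 (by linarith)
  have h2 : 0 ≤ 1 - z ^ p := by linarith
  unfold Ig; positivity

lemma rho1_pos {p t : ℝ} (h : 0 < Real.cos t) : 0 < (rho p t).1 := div_pos h (Np_pos p t)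
lemma rho1_nonneg {p t : ℝ} (h : 0 ≤ Real.cos t) : 0 ≤ (rho p t).1 := div_nonneg h (Np_pos p t).le
lemma rho2_nonneg {p t : ℝ} (h : 0 ≤ Real.sin t) : 0 ≤ (rho p t).2 := div_nonneg h (Np_pos p t).le

lemma rho2_mem {p : ℝ} (hp : 1 < p) {t : ℝ} (h : 0 < Real.cos t) (h' : 0 ≤ Real.sin t) :
    (rho p t).2 ∈ Set.Ico (0 : ℝ) 1 := by
  have hp0 : 0 < p := by linarith
  have h2 := rho2_nonneg (p := p) h'
  refine ⟨h2, ?_⟩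
  have h3 := rho_mem hp t
  have h4 : 0 < |(rho p t).1| ^ p := Real.rpow_pos_of_pos (abs_pos.2 (rho1_pos h).ne') _
  by_contra! hc
  have := Real.one_le_rpow hc hp0.le
  rw [abs_of_nonneg h2] at h3
  linarith

lemma Ig_speed {p : ℝ} (hp : 1 < p) {t : ℝ} (h : 0 < Real.cos t) (h' : 0 ≤ Real.sin t) :
    Ig p (rho p t).2 * (sg p (Real.cos t) * kap p t) = speed p t := by
  have hx := rho1_pos (p := p) h
  have hy := rho2_nonneg (p := p) h'
  have hv := vel2 hp t
  have hm := rho_mem hp t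
  have hp0 : 0 < p := by linarith
  rw [abs_of_pos hx, abs_of_nonneg hy] at hm
  have hs := speed_pos hp t
  have hn := nn_pos hp t
  have hsx : 0 < (rho p t).1 ^ (p - 1) := Real.rpow_pos_of_pos hx _
  have key : Ig p (rho p t).2 = nn p t / sg p (rho p t).1 := by
    rw [sg_nonneg hp hx.le]
    unfold Ig nn
    rw [show 1 - (rho p t).2 ^ p = (rho p t).1 ^ p by linarith]
    unfold lpN
    simp only [abs_sg hp, abs_of_pos hx, abs_of_nonneg hy]
    rw [show p ^ 2 - p = (p - 1) * p by ring, Real.rpow_mul hy, ← Real.rpow_mul hx.le,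
      show p * (1 - p) = -((p - 1) * p) by ring, Real.rpow_neg hx.le, Real.rpow_mul hx.le]
    set X := (rho p t).1 ^ (p - 1)
    set Y := (rho p t).2 ^ (p - 1) with hY
    have hY0 : 0 ≤ Y := Real.rpow_nonneg hy _
    have hXp : 0 < X ^ p := Real.rpow_pos_of_pos hsx _
    rw [show Y ^ p * (X ^ p)⁻¹ + 1 = (Y ^ p + X ^ p) / X ^ p by field_simp,
      Real.div_rpow (by positivity) hXp.le, ← Real.rpow_mul hsx.le, mul_one_div_cancel hp0.ne',
      Real.rpow_one]
  have hsx' : 0 < sg p (rho p t).1 := by rw [sg_nonneg hp hx.le]; exact hsx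
  rw [key]
  field_simp at hv ⊢
  linarith

lemma chg {p : ℝ} (hp : 1 < p) {a b : ℝ} (ha : 0 ≤ a) (hab : a ≤ b) (hb : b < Real.pi / 2) :
    (∫ z in (rho p a).2..(rho p b).2, Ig p z) = Lf p b - Lf p a := by
  have hc : ∀ t ∈ Set.uIcc a b, 0 < Real.cos t ∧ 0 ≤ Real.sin t := by
    intro t ht
    rw [Set.uIcc_of_le hab] at ht
    exact ⟨Real.cos_pos_of_mem_Ioo ⟨by linarith [ht.1, Real.pi_pos], by linarith [ht.2]⟩,
      Real.sin_nonneg_of_mem_Icc ⟨by linarith [ht.1], by linarith [ht.2, Real.pi_pos]⟩⟩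
  have h := intervalIntegral.integral_comp_mul_deriv'' (a := a) (b := b)
    (f := fun t => (rho p t).2) (f' := fun t => sg p (Real.cos t) * kap p t) (g := Ig p)
    (fun t _ => (hasDerivAt_rho2 hp t).continuousAt.continuousWithinAt)
    (fun t _ => (hasDerivAt_rho2 hp t).hasDerivWithinAt)
    (((continuous_sg hp).comp Real.continuous_cos).mul (continuous_kap hp)).continuousOn
    ((Ig_cont hp).mono (by
      rintro _ ⟨t, ht, rfl⟩
      exact rho2_mem hp (hc t ht).1 (hc t ht).2))
  rw [← h, ← Lf_sub hp]
  apply intervalIntegral.integral_congr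
  intro t ht
  exact Ig_speed hp (hc t ht).1 (hc t ht).2

lemma rho_zero {p : ℝ} : (rho p 0).2 = 0 := by simp [rho]

lemma rho_half {p : ℝ} (hp : 1 < p) : (rho p (Real.pi / 2)).2 = 1 := by
  have : p ≠ 0 := by linarith
  simp [rho, Np, this]

lemma rho_quarter {p : ℝ} (hp : 1 < p) : (rho p (Real.pi / 4)).2 = (2 : ℝ) ^ (-(1 / p)) := by
  have hp0 : 0 < p := by linarith
  have h := rho_mem hp (Real.pi / 4)
  have e : (rho p (Real.pi / 4)).1 = (rho p (Real.pi / 4)).2 := by simp [rho]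
  have hy : 0 ≤ (rho p (Real.pi / 4)).2 := rho2_nonneg (by rw [Real.sin_pi_div_four]; positivity)
  rw [e, abs_of_nonneg hy] at h
  have h2 : (rho p (Real.pi / 4)).2 ^ p = 2⁻¹ := by linarith
  rw [← Real.rpow_rpow_inv hy hp0.ne', h2, Real.inv_rpow (by norm_num), Real.rpow_neg (by norm_num),
    one_div]

lemma delta1 {p s : ℝ} (hp : 1 < p) (h0 : 0 ≤ s) (hs : s ≤ (2 : ℝ) ^ (-(1 / p))) :
    0 ≤ (∫ z in (0 : ℝ)..s, Ig p z) ∧ (∫ z in (0 : ℝ)..s, Ig p z) ≤ Lf p (Real.pi / 2) / 2 := by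
  have hpi := Real.pi_pos
  have h := chg hp le_rfl (show 0 ≤ Real.pi / 4 by positivity) (by linarith)
  rw [rho_zero, rho_quarter hp, Lf_zero, sub_zero, Lf_quarter hp] at h
  have hq : (2 : ℝ) ^ (-(1 / p)) < 1 :=
    Real.rpow_lt_one_of_one_lt_of_neg (by norm_num) (neg_lt_zero.2 (by positivity))
  constructor
  · exact intervalIntegral.integral_nonneg h0 fun z hz => Ig_nonneg hz.1 (by linarith [hz.2]) hp
  · rw [← h]
    refine intervalIntegral.integral_mono_interval le_rfl h0 hs ?_ ?_
    · refine (ae_restrict_iff' measurableSet_Ioc).2 (Filter.Eventually.of_forall fun z hz => ?_)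
      exact Ig_nonneg hz.1.le (by linarith [hz.2]) hp
    · refine ContinuousOn.intervalIntegrable ((Ig_cont hp).mono ?_)
      rw [Set.uIcc_of_le (h0.trans hs)]
      exact fun z hz => ⟨hz.1, hz.2.trans_lt hq⟩

lemma delta2 {p s : ℝ} (hp : 1 < p) (h0 : (2 : ℝ) ^ (-(1 / p)) ≤ s) (hs : s < 1) :
    0 ≤ (∫ z in ((2 : ℝ) ^ (-(1 / p)))..s, Ig p z) ∧
      (∫ z in ((2 : ℝ) ^ (-(1 / p)))..s, Ig p z) ≤ Lf p (Real.pi / 2) / 2 := by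
  have hpi := Real.pi_pos
  have hc : ContinuousOn (fun t => (rho p t).2) (Set.Icc (Real.pi / 4) (Real.pi / 2)) :=
    fun t _ => (hasDerivAt_rho2 hp t).continuousAt.continuousWithinAt
  obtain ⟨t, ht, rfl⟩ := intermediate_value_Icc (by linarith) hc
    (show s ∈ Set.Icc (rho p (Real.pi / 4)).2 (rho p (Real.pi / 2)).2 by
      rw [rho_quarter hp, rho_half hp]; exact ⟨h0, hs.le⟩)
  have ht2 : t < Real.pi / 2 := by
    refine lt_of_le_of_ne ht.2 ?_
    rintro rfl
    simp only [rho_half hp] at hs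
    exact lt_irrefl _ hs
  simp only
  rw [← rho_quarter hp, chg hp (by positivity) ht.1 ht2, Lf_quarter hp]
  have m1 := (Lf_strictMono hp).monotone ht.1
  have m2 := (Lf_strictMono hp).monotone ht.2
  rw [Lf_quarter hp] at m1
  constructor <;> linarith

lemma geom {p : ℝ} {A B : ℝ} (h1 : |B| ≤ A) (h2 : A + |B| ≤ Real.pi / 2) :
    0 ≤ (rho p A).1 ∧ 0 ≤ (rho p A).2 ∧ 0 < (rho p B).1 ∧
    |(rho p B).2| * (rho p A).1 ≤ (rho p A).2 * (rho p B).1 ∧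
    |(rho p B).2| * (rho p A).2 ≤ (rho p A).1 * (rho p B).1 := by
  have hpi := Real.pi_pos
  have hB := abs_nonneg B
  have hNA := Np_pos p A
  have hNB := Np_pos p B
  have cA : 0 ≤ Real.cos A := Real.cos_nonneg_of_mem_Icc ⟨by linarith, by linarith⟩
  have sA : 0 ≤ Real.sin A := Real.sin_nonneg_of_mem_Icc ⟨by linarith, by linarith⟩
  have cB : 0 < Real.cos B := by
    rw [← Real.cos_abs]; exact Real.cos_pos_of_mem_Ioo ⟨by linarith, by linarith⟩
  have sB : |Real.sin B| = Real.sin |B| := by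
    have : 0 ≤ Real.sin |B| := Real.sin_nonneg_of_mem_Icc ⟨by linarith, by linarith⟩
    rcases le_total 0 B with h | h
    · rw [abs_of_nonneg h] at this ⊢; exact abs_of_nonneg this
    · rw [abs_of_nonpos h] at this ⊢
      rw [Real.sin_neg] at this ⊢
      exact abs_of_nonpos (by linarith)
  have q1 : 0 ≤ Real.sin (A - |B|) := Real.sin_nonneg_of_mem_Icc ⟨by linarith, by linarith⟩
  have q2 : 0 ≤ Real.cos (A + |B|) := Real.cos_nonneg_of_mem_Icc ⟨by linarith, by linarith⟩
  rw [Real.sin_sub, Real.cos_abs, ← sB] at q1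
  rw [Real.cos_add, Real.cos_abs, ← sB] at q2
  refine ⟨rho1_nonneg cA, rho2_nonneg sA, rho1_pos cB, ?_, ?_⟩
  · simp only [rho, abs_div, abs_of_pos hNB]
    rw [div_mul_div_comm, div_mul_div_comm, mul_comm (Np p B)]
    exact div_le_div_of_nonneg_right (by linarith) (by positivity)
  · simp only [rho, abs_div, abs_of_pos hNB]
    rw [div_mul_div_comm, div_mul_div_comm, mul_comm (Np p B)]
    exact div_le_div_of_nonneg_right (by linarith) (by positivity)

lemma sign_deriv {p : ℝ} (hp : 1 < p) {A B : ℝ} (h1 : |B| ≤ A) (h2 : A + |B| ≤ Real.pi / 2) :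
    (p ≤ 2 → 0 ≤ sg p ((rho p A).1 + (rho p B).1) *
        (-sg p (rho p A).2 / nn p A + -sg p (rho p B).2 / nn p B)
      + sg p ((rho p A).2 + (rho p B).2) *
        (sg p (rho p A).1 / nn p A + sg p (rho p B).1 / nn p B)) ∧
    (2 ≤ p → sg p ((rho p A).1 + (rho p B).1) *
        (-sg p (rho p A).2 / nn p A + -sg p (rho p B).2 / nn p B)
      + sg p ((rho p A).2 + (rho p B).2) *
        (sg p (rho p A).1 / nn p A + sg p (rho p B).1 / nn p B) ≤ 0) := by
  obtain ⟨hx, hy, hz, g1, g2⟩ := geom (p := p) h1 h2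
  have ha := rho_mem hp A
  have hb := rho_mem hp B
  have hp0 : 0 < p := by linarith
  rw [abs_of_nonneg hx, abs_of_nonneg hy] at ha
  rw [abs_of_pos hz] at hb
  have hyw : 0 ≤ (rho p A).2 + (rho p B).2 := by
    have : |(rho p B).2| ≤ (rho p A).2 := by
      have hw := abs_nonneg (rho p B).2
      have g : |(rho p B).2| ^ p * (rho p A).1 ^ p ≤ (rho p A).2 ^ p * (rho p B).1 ^ p := by
        rw [← Real.mul_rpow hw hx, ← Real.mul_rpow hy hz.le]
        exact Real.rpow_le_rpow (by positivity) g1 hp0.le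
      rw [show (rho p A).1 ^ p = 1 - (rho p A).2 ^ p by linarith,
        show (rho p B).1 ^ p = 1 - |(rho p B).2| ^ p by linarith] at g
      exact (Real.rpow_le_rpow_iff hw hy hp0).1 (by linarith)
    linarith [neg_abs_le (rho p B).2]
  refine core_final hp hx hy hz g1 g2 ha hb hyw ?_ ?_ (nn_pos hp A) (nn_pos hp B)
  · simp only [nn, lpN, abs_sg hp, abs_of_nonneg hx, abs_of_nonneg hy]
  · simp only [nn, lpN, abs_sg hp, abs_of_pos hz]

lemma mono_main {p δ : ℝ} (hp : 1 < p) (hd0 : 0 ≤ δ) (hd : δ ≤ Lf p (Real.pi / 2) / 2) {g : ℝ → ℝ}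
    (g1 : ∀ s, Lf p (g s) = s) (g3 : ∀ s, HasDerivAt g (speed p (g s))⁻¹ s) :
    (p ≤ 2 → MonotoneOn (fun s => lpN p (rho p (g (s + δ)) + rho p (g (s - δ))))
      (Set.Icc 0 (Lf p (Real.pi / 2) / 2))) ∧
    (2 ≤ p → AntitoneOn (fun s => lpN p (rho p (g (s + δ)) + rho p (g (s - δ))))
      (Set.Icc 0 (Lf p (Real.pi / 2) / 2))) := by
  have hp0 : 0 < p := by linarith
  have d1 : ∀ s, HasDerivAt (fun s => (rho p (g s)).1) (-sg p (rho p (g s)).2 / nn p (g s)) s := by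
    intro s
    rw [← vel1 hp]
    exact (hasDerivAt_rho1 hp (g s)).comp s (g3 s)
  have d2 : ∀ s, HasDerivAt (fun s => (rho p (g s)).2) (sg p (rho p (g s)).1 / nn p (g s)) s := by
    intro s
    rw [← vel2 hp]
    exact (hasDerivAt_rho2 hp (g s)).comp s (g3 s)
  set Ψ : ℝ → ℝ := fun s => |(rho p (g (s + δ))).1 + (rho p (g (s - δ))).1| ^ p +
    |(rho p (g (s + δ))).2 + (rho p (g (s - δ))).2| ^ p with hΨ
  have dΨ : ∀ s, HasDerivAt Ψ
      (p * (sg p ((rho p (g (s + δ))).1 + (rho p (g (s - δ))).1) *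
        (-sg p (rho p (g (s + δ))).2 / nn p (g (s + δ))
          + -sg p (rho p (g (s - δ))).2 / nn p (g (s - δ)))
      + sg p ((rho p (g (s + δ))).2 + (rho p (g (s - δ))).2) *
        (sg p (rho p (g (s + δ))).1 / nn p (g (s + δ))
          + sg p (rho p (g (s - δ))).1 / nn p (g (s - δ))))) s := by
    intro s
    have e1 := ((d1 (s + δ)).comp_add_const s δ).add ((d1 (s - δ)).comp_sub_const s δ)
    have e2 := ((d2 (s + δ)).comp_add_const s δ).add ((d2 (s - δ)).comp_sub_const s δ)
    have f1 := (hasDerivAt_absp hp _).comp s e1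
    have f2 := (hasDerivAt_absp hp _).comp s e2
    refine (f1.add f2).congr_deriv ?_
    simp only [Pi.add_apply]
    ring
  have cΨ : Continuous Ψ := continuous_iff_continuousAt.2 fun s => (dΨ s).continuousAt
  have Ψ0 : ∀ s, 0 ≤ Ψ s := fun s => by simp only [hΨ]; positivity
  have hle : ∀ a b, g a ≤ g b ↔ a ≤ b := fun a b => by
    rw [← (Lf_strictMono hp).le_iff_le, g1, g1]
  have cond : ∀ s ∈ Set.Icc 0 (Lf p (Real.pi / 2) / 2),
      |g (s - δ)| ≤ g (s + δ) ∧ g (s + δ) + |g (s - δ)| ≤ Real.pi / 2 := by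
    intro s hs
    have c1 : g (s - δ) ≤ g (s + δ) := (hle _ _).2 (by linarith)
    have c2 : -g (s - δ) ≤ g (s + δ) := by
      rw [← (Lf_strictMono hp).le_iff_le, Lf_neg hp, g1, g1]; linarith [hs.1]
    have c3 : g (s + δ) ≤ Real.pi / 2 - g (s - δ) := by
      rw [← (Lf_strictMono hp).le_iff_le, Lf_refl hp, g1, g1]; linarith [hs.2]
    have c4 : g (s + δ) ≤ g (s - δ) + Real.pi / 2 := by
      rw [← (Lf_strictMono hp).le_iff_le, Lf_add hp, g1, g1]; linarith [hs.2]
    refine ⟨abs_le.2 ⟨by linarith, c1⟩, ?_⟩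
    have : |g (s - δ)| ≤ Real.pi / 2 - g (s + δ) := abs_le.2 ⟨by linarith, by linarith⟩
    linarith
  have eF : (fun s => lpN p (rho p (g (s + δ)) + rho p (g (s - δ)))) = fun s => Ψ s ^ (1 / p) := rfl
  rw [eF]
  constructor
  · intro h
    have : MonotoneOn Ψ (Set.Icc 0 (Lf p (Real.pi / 2) / 2)) := by
      refine monotoneOn_of_deriv_nonneg (convex_Icc _ _) cΨ.continuousOn
        (fun s _ => (dΨ s).differentiableAt.differentiableWithinAt) fun s hs => ?_
      rw [(dΨ s).deriv]
      obtain ⟨k1, k2⟩ := cond s (interior_subset hs)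
      exact mul_nonneg hp0.le ((sign_deriv hp k1 k2).1 h)
    intro a ha b hb hab
    exact Real.rpow_le_rpow (Ψ0 a) (this ha hb hab) (by positivity)
  · intro h
    have : AntitoneOn Ψ (Set.Icc 0 (Lf p (Real.pi / 2) / 2)) := by
      refine antitoneOn_of_deriv_nonpos (convex_Icc _ _) cΨ.continuousOn
        (fun s _ => (dΨ s).differentiableAt.differentiableWithinAt) fun s hs => ?_
      rw [(dΨ s).deriv]
      obtain ⟨k1, k2⟩ := cond s (interior_subset hs)
      exact mul_nonpos_of_nonneg_of_nonpos hp0.le ((sign_deriv hp k1 k2).2 h)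
    intro a ha b hb hab
    exact Real.rpow_le_rpow (Ψ0 b) (this ha hb hab) (by positivity)

lemma chord_eq {p δ ep : ℝ} (hp : 1 < p) (he : ep = 2 * Lf p (Real.pi / 2) + 2 * δ) {g : ℝ → ℝ}
    (g2 : ∀ t, g (Lf p t) = t) {θ α β : ℝ} (h1 : (∫ t in (θ - β)..θ, speed p t) = ep / 2)
    (h2 : (∫ t in θ..(θ + α), speed p t) = ep / 2) :
    lpN p (rho p (θ + α) - rho p (θ - β)) =
      lpN p (rho p (g (Lf p θ + δ)) + rho p (g (Lf p θ - δ))) := by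
  rw [Lf_sub hp] at h1 h2
  have k1 := Lf_add hp (θ + α - Real.pi / 2)
  rw [sub_add_cancel] at k1
  have k2 := Lf_add hp (θ - β)
  have e1 : Lf p θ + δ = Lf p (θ + α - Real.pi / 2) := by linarith
  have e2 : Lf p θ - δ = Lf p (θ - β + Real.pi / 2) := by linarith
  rw [e1, e2, g2, g2, rho_add]
  have r := rho_add p (θ + α - Real.pi / 2)
  rw [sub_add_cancel] at r
  rw [r]
  unfold lpN
  simp only [Prod.fst_sub, Prod.snd_sub, Prod.fst_add, Prod.snd_add]
  rw [← abs_neg (-(rho p (θ + α - Real.pi / 2)).2 - (rho p (θ - β)).1), add_comm]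
  congr 4 <;> ring_nf

lemma ep_spec {p ep : ℝ} (hp : 1 < p)
    (hep1 : p ≤ 2 → ep = piP p
      + 2 * ∫ z in (0 : ℝ)..((((2 : ℝ) ^ p - 1) ^ (1 / (p - 1)) + 1) ^ (-(1 / p))),
          (z ^ (p ^ 2 - p) * (1 - z ^ p) ^ (1 - p) + 1) ^ (1 / p))
    (hep2 : 2 < p → ∃ w ∈ Set.Ioo (0 : ℝ) 1, w ^ p + 1 = 2 * (1 - w) ^ p ∧
      ep = piP p
        + 2 * ∫ z in ((2 : ℝ) ^ (-(1 / p)))..((w ^ (p / (p - 1)) + 1) ^ (-(1 / p))),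
            (z ^ (p ^ 2 - p) * (1 - z ^ p) ^ (1 - p) + 1) ^ (1 / p)) :
    ∃ δ, 0 ≤ δ ∧ δ ≤ Lf p (Real.pi / 2) / 2 ∧ ep = 2 * Lf p (Real.pi / 2) + 2 * δ := by
  have hp0 : 0 < p := by linarith
  have hl : 0 < p - 1 := by linarith
  have hneg : -(1 / p) < 0 := neg_lt_zero.2 (by positivity)
  rcases le_or_gt p 2 with h | h
  · have e := hep1 h
    have b1 : (1 : ℝ) ≤ (2 : ℝ) ^ p - 1 := by
      have : (2 : ℝ) ^ (1 : ℝ) ≤ (2 : ℝ) ^ p := Real.rpow_le_rpow_of_exponent_le (by norm_num) hp.le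
      rw [Real.rpow_one] at this; linarith
    have b2 : (1 : ℝ) ≤ ((2 : ℝ) ^ p - 1) ^ (1 / (p - 1)) := Real.one_le_rpow b1 (by positivity)
    have b := delta1 hp
      (s := (((2 : ℝ) ^ p - 1) ^ (1 / (p - 1)) + 1) ^ (-(1 / p)))
      (Real.rpow_nonneg (by linarith) _)
      (Real.rpow_le_rpow_of_nonpos (by norm_num) (by linarith) hneg.le)
    exact ⟨_, b.1, b.2, by rw [e, piP_eq hp]; rfl⟩
  · obtain ⟨w, hw, -, e⟩ := hep2 h
    have c1 : 0 < w ^ (p / (p - 1)) := Real.rpow_pos_of_pos hw.1 _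
    have c2 : w ^ (p / (p - 1)) ≤ 1 := Real.rpow_le_one hw.1.le hw.2.le (by positivity)
    have b := delta2 hp (s := (w ^ (p / (p - 1)) + 1) ^ (-(1 / p)))
      (Real.rpow_le_rpow_of_nonpos (by linarith) (by linarith) hneg.le)
      (Real.rpow_lt_one_of_one_lt_of_neg (by linarith) hneg)
    exact ⟨_, b.1, b.2, by rw [e, piP_eq hp]; rfl⟩

/-- For every `p > 1`, the chord-length function `σ_p(θ)` of the arc of `C_p` of
ℓ_p length `e_p` with arc-midpoint `ρ_p(θ)` is increasing on `[0, π/4]` when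
`p ∈ (1,2)`, decreasing on `[0, π/4]` when `p ∈ (2,∞)`, and constant when `p = 2`.
Here an arc with midpoint `ρ_p(θ)` and endpoints `ρ_p(θ−β)`, `ρ_p(θ+α)` has both of
its halves of ℓ_p length `e_p/2`, and `e_p` is as in the worst case of the optimal
algorithm (piecewise in `p`, via the root `w_p` of `w^p + 1 = 2(1−w)^p` for `p > 2`). -/
theorem stmt_17 (p : ℝ) (hp : 1 < p) (ep : ℝ)
    (hep1 : p ≤ 2 → ep = piP p
      + 2 * ∫ z in (0 : ℝ)..((((2 : ℝ) ^ p - 1) ^ (1 / (p - 1)) + 1) ^ (-(1 / p))),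
          (z ^ (p ^ 2 - p) * (1 - z ^ p) ^ (1 - p) + 1) ^ (1 / p))
    (hep2 : 2 < p → ∃ w ∈ Set.Ioo (0 : ℝ) 1, w ^ p + 1 = 2 * (1 - w) ^ p ∧
      ep = piP p
        + 2 * ∫ z in ((2 : ℝ) ^ (-(1 / p)))..((w ^ (p / (p - 1)) + 1) ^ (-(1 / p))),
            (z ^ (p ^ 2 - p) * (1 - z ^ p) ^ (1 - p) + 1) ^ (1 / p)) :
    ∀ θ ∈ Set.Icc (0 : ℝ) (Real.pi / 4), ∀ θ' ∈ Set.Icc (0 : ℝ) (Real.pi / 4), θ ≤ θ' →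
      ∀ α β α' β' : ℝ, 0 ≤ α → 0 ≤ β → 0 ≤ α' → 0 ≤ β' →
        (∫ t in (θ - β)..θ, speed p t) = ep / 2 →
        (∫ t in θ..(θ + α), speed p t) = ep / 2 →
        (∫ t in (θ' - β')..θ', speed p t) = ep / 2 →
        (∫ t in θ'..(θ' + α'), speed p t) = ep / 2 →
        (p < 2 → lpN p (rho p (θ + α) - rho p (θ - β))
            ≤ lpN p (rho p (θ' + α') - rho p (θ' - β'))) ∧
        (2 < p → lpN p (rho p (θ' + α') - rho p (θ' - β'))
            ≤ lpN p (rho p (θ + α) - rho p (θ - β))) ∧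
        (p = 2 → lpN p (rho p (θ + α) - rho p (θ - β))
            = lpN p (rho p (θ' + α') - rho p (θ' - β'))) := by
  obtain ⟨δ, hd0, hd, he⟩ := ep_spec hp hep1 hep2
  obtain ⟨g, g1, g2, g3⟩ := exists_inv hp
  intro θ hθ θ' hθ' hle α β α' β' _ _ _ _ h1 h2 h3 h4
  obtain ⟨m1, m2⟩ := mono_main hp hd0 hd g1 g3
  rw [chord_eq hp he g2 h1 h2, chord_eq hp he g2 h3 h4]
  have hm := (Lf_strictMono hp).monotone
  have mem : ∀ t ∈ Set.Icc (0 : ℝ) (Real.pi / 4), Lf p t ∈ Set.Icc 0 (Lf p (Real.pi / 2) / 2) := by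
    intro t ht
    rw [← Lf_quarter hp]
    exact ⟨by rw [← Lf_zero p]; exact hm ht.1, hm ht.2⟩
  have a1 : p ≤ 2 → _ := fun h => m1 h (mem θ hθ) (mem θ' hθ') (hm hle)
  have a2 : 2 ≤ p → _ := fun h => m2 h (mem θ hθ) (mem θ' hθ') (hm hle)
  exact ⟨fun h => a1 h.le, fun h => a2 h.le, fun h => le_antisymm (a1 h.le) (a2 h.ge)⟩
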